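/- Let ψ be an approximation function with ψ(q) < 1/2 for all q, satisfying ψ(q) = O((q (log log q)²)⁻¹), and suppose ψ is weakly extra divergent. Then for every wildly Liouville irrational number γ, the set W(ψ,γ) has Lebesgue measure one. -/

import Mathlib

open MeasureTheory Filter Real

/-- Distance from a real number to the nearest integer. -/
noncomputable def dnint (x : ℝ) : ℝ := |x - round x|

/-- The inhomogeneous approximation set `W(ψ,γ)`. -/
noncomputable def W (ψ : ℕ → ℝ) (γ : ℝ) : Set ℝ :=
  {x ∈ Set.Icc (0:ℝ) 1 | {q : ℕ | 0 < q ∧ dnint (q * x - γ) < ψ q}.Infinite}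

/-- `σ_γ(Q)`: the infimum of all `σ > 0` with `‖qγ‖ ≥ q^{-σ}` for all `2 ≤ q ≤ Q`. -/
noncomputable def sigmaExp (γ : ℝ) (Q : ℕ) : ℝ :=
  sInf {σ : ℝ | 0 < σ ∧ ∀ q : ℕ, 2 ≤ q → q ≤ Q → (q : ℝ) ^ (-σ) ≤ dnint (q * γ)}

/-- `γ` is tamely Liouville if `σ_γ(Q) ≤ C (log₂ Q)^{1/4-ε}` for all `Q ≥ 2`. -/
def TamelyLiouville (γ : ℝ) : Prop :=
  ∃ ε > (0:ℝ), ∃ C > (0:ℝ), ∀ Q : ℕ, 2 ≤ Q →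
    sigmaExp γ Q ≤ C * (Real.logb 2 Q) ^ ((1:ℝ)/4 - ε)

/-- `ψ` is weakly extra divergent: `liminf_{Q→∞} ∑_{q=Q}^{⌊Q^{(log₂ Q)^{1/8}}⌋} ψ(q) = ∞`. -/
def WeaklyExtraDivergent (ψ : ℕ → ℝ) : Prop :=
  Tendsto (fun Q : ℕ =>
    ∑ q ∈ Finset.Icc Q ⌊(Q:ℝ) ^ ((Real.logb 2 Q) ^ ((1:ℝ)/8))⌋₊, ψ q) atTop atTop

/-
Since `γ` is wildly Liouville, there are rationals `ρ` of denominator `n → ∞` such that `γ` and `ρ`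
are indistinguishable in all multiples `kγ` with `k` up to `N = Q ^ (log Q) ^ α`, where `Q = n ^ 6`.
If the sets `{x : ‖qx - γ‖ < ψ q}` and `{x : ‖rx - γ‖ < ψ r}` with `Q ≤ q < r ≤ N` meet, then
`((r - q) / gcd(q, r)) γ` is close to an integer, hence `(r - q) / gcd(q, r)` is confined to few
residue classes modulo `n`. This makes the overlaps rare enough that the second moment of the
counting function of the sets in the window is `S² + O(S + 1)`, where `S`, its mean, tends to
infinity; so almost every point lies in one of the sets.
-/

section SecondMoment

lemma sum_sum_eq_sum_diag_add_two_mul_sum_lt {ι R : Type*} [LinearOrder ι] [Semiring R]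
    (s : Finset ι) {f : ι → ι → R} (hf : ∀ i j, f i j = f j i) :
    ∑ i ∈ s, ∑ j ∈ s, f i j = ∑ i ∈ s, f i i + 2 * ∑ j ∈ s, ∑ i ∈ s with i < j, f i j := by
  have hsplit (i) (hi : i ∈ s) : ∑ j ∈ s, f i j =
      f i i + ((∑ j ∈ s with j < i, f j i) + ∑ j ∈ s with i < j, f i j) := by
    rw [← Finset.add_sum_erase s _ hi,
      ← Finset.sum_filter_add_sum_filter_not (s.erase i) (fun j ↦ j < i)]
    congr 2
    · exact Finset.sum_congr (by ext j; grind) fun j _ ↦ hf i j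
    · exact Finset.sum_congr (by ext j; grind) fun j _ ↦ rfl
  have hswap : ∑ i ∈ s, ∑ j ∈ s with i < j, f i j = ∑ j ∈ s, ∑ i ∈ s with i < j, f i j :=
    Finset.sum_comm' (by simp only [Finset.mem_filter]; tauto)
  rw [Finset.sum_congr rfl hsplit, Finset.sum_add_distrib, Finset.sum_add_distrib, hswap, two_mul]

variable {Ω ι : Type*} [MeasurableSpace Ω] {μ : Measure Ω} [IsProbabilityMeasure μ]

open ProbabilityTheory

lemma memLp_indicator_one {A : Set Ω} (hA : MeasurableSet A) (p : ENNReal) :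
    MemLp (A.indicator (1 : Ω → ℝ)) p μ :=
  memLp_indicator_const p hA 1 (.inr (measure_ne_top μ A))

lemma covariance_indicator_one {A B : Set Ω} (hA : MeasurableSet A) (hB : MeasurableSet B) :
    cov[A.indicator 1, B.indicator 1; μ] = μ.real (A ∩ B) - μ.real A * μ.real B := by
  rw [covariance_eq_sub (memLp_indicator_one hA 2) (memLp_indicator_one hB 2),
    ← Set.inter_indicator_one, integral_indicator_one hA, integral_indicator_one hB,
    integral_indicator_one (hA.inter hB)]

/- On the complement of the union the sum of the indicators is `0`, at distance `∑ μ (A i)` from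
its mean. -/
lemma measureReal_compl_biUnion_mul_sq_le (s : Finset ι) {A : ι → Set Ω}
    (hA : ∀ i, MeasurableSet (A i)) :
    μ.real (⋃ i ∈ s, A i)ᶜ * (∑ i ∈ s, μ.real (A i)) ^ 2 ≤
      ∑ i ∈ s, ∑ j ∈ s, (μ.real (A i ∩ A j) - μ.real (A i) * μ.real (A j)) := by
  set f : Ω → ℝ := ∑ i ∈ s, (A i).indicator 1 with hf
  set T := ∑ i ∈ s, μ.real (A i)
  have hLp (i) (_ : i ∈ s) : MemLp ((A i).indicator (1 : Ω → ℝ)) 2 μ := memLp_indicator_one (hA i) 2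
  have hmean : ∫ x, f x ∂μ = T := by
    simp only [hf, Finset.sum_apply]
    rw [integral_finsetSum s fun i hi ↦ (hLp i hi).integrable one_le_two]
    exact Finset.sum_congr rfl fun i _ ↦ integral_indicator_one (hA i)
  have hvar : Var[f; μ] = ∑ i ∈ s, ∑ j ∈ s, (μ.real (A i ∩ A j) - μ.real (A i) * μ.real (A j)) := by
    rw [variance_sum' hLp]
    exact Finset.sum_congr rfl fun i _ ↦ Finset.sum_congr rfl fun j _ ↦
      covariance_indicator_one (hA i) (hA j)
  rw [← hvar]
  obtain hT | hT := (show 0 ≤ T by positivity).eq_or_lt'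
  · rw [hT]
    simp [variance_nonneg f μ]
  have hsub : (⋃ i ∈ s, A i)ᶜ ⊆ {x | T ≤ |f x - ∫ x, f x ∂μ|} := by
    intro x hx
    have hfx : f x = 0 := by
      rw [hf, Finset.sum_apply]
      exact Finset.sum_eq_zero fun i hi ↦
        Set.indicator_of_notMem (fun h ↦ hx (Set.mem_biUnion hi h)) _
    simp [hmean, hfx, le_abs_self]
  rw [← le_div_iff₀ (by positivity)]
  exact ENNReal.toReal_le_of_le_ofReal (div_nonneg (variance_nonneg f μ) (sq_nonneg T))
    ((measure_mono hsub).trans (meas_ge_le_variance_div_sq (memLp_finsetSum' s hLp) hT))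

lemma measureReal_compl_biUnion_mul_sq_le_of_linearOrder [LinearOrder ι] (s : Finset ι)
    {A : ι → Set Ω} (hA : ∀ i, MeasurableSet (A i)) :
    μ.real (⋃ i ∈ s, A i)ᶜ * (∑ i ∈ s, μ.real (A i)) ^ 2 ≤ ∑ i ∈ s, μ.real (A i) +
      2 * ∑ j ∈ s, ∑ i ∈ s with i < j, (μ.real (A i ∩ A j) - μ.real (A i) * μ.real (A j)) := by
  refine (measureReal_compl_biUnion_mul_sq_le s hA).trans ?_
  rw [sum_sum_eq_sum_diag_add_two_mul_sum_lt s fun i j ↦ by rw [Set.inter_comm, mul_comm]]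
  gcongr with i
  rw [Set.inter_self]
  exact sub_le_self _ (by positivity)

end SecondMoment

section ApproxSet

open Metric

/-- The set of points `x` of the circle `ℝ / ℤ` such that `q • x` lies within `r` of `γ`. -/
def approxSet (γ : UnitAddCircle) (q : ℕ) (r : ℝ) : Set UnitAddCircle :=
  (fun x ↦ q • x) ⁻¹' ball γ r

variable {γ δ x : UnitAddCircle} {q r u v : ℕ} {a b : ℝ}

lemma mem_approxSet : x ∈ approxSet γ q a ↔ ‖q • x - γ‖ < a := by
  rw [approxSet, Set.mem_preimage, mem_ball, dist_eq_norm]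

lemma measurableSet_approxSet : MeasurableSet (approxSet γ q a) :=
  (isOpen_ball.preimage (continuous_nsmul q)).measurableSet

lemma volume_real_approxSet (hq : q ≠ 0) (ha : 0 ≤ a) :
    volume.real (approxSet γ q a) = min 1 (2 * a) := by
  have hmul : MeasurePreserving (fun x : UnitAddCircle ↦ q • x) volume volume := by
    simpa using Measure.measurePreserving_zsmul (volume : Measure UnitAddCircle)
      (n := (q : ℤ)) (mod_cast hq)
  rw [approxSet, hmul.measureReal_preimage isOpen_ball.measurableSet.nullMeasurableSet,
    measureReal_def, ← measure_congr AddCircle.closedBall_ae_eq_ball, AddCircle.volume_closedBall,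
    ENNReal.toReal_ofReal (by positivity)]

lemma norm_nsmul_sub_nsmul_lt (huv : u * q = v * r) (hu : u ≠ 0) (hxq : x ∈ approxSet γ q a)
    (hxr : x ∈ approxSet γ r b) : ‖u • γ - v • γ‖ < u * a + v * b := by
  rw [mem_approxSet] at hxq hxr
  have hcancel : u • γ - v • γ = v • (r • x - γ) - u • (q • x - γ) := by
    rw [nsmul_sub, nsmul_sub, ← mul_nsmul', ← mul_nsmul', huv]
    abel
  calc ‖u • γ - v • γ‖ ≤ v * ‖r • x - γ‖ + u * ‖q • x - γ‖ := by
        rw [hcancel]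
        exact (norm_sub_le _ _).trans (add_le_add norm_nsmul_le norm_nsmul_le)
    _ < u * a + v * b := by
        rw [add_comm]
        exact add_lt_add_of_lt_of_le (by gcongr) (by gcongr)

lemma card_mul_measureReal_inter_le {Ω ι : Type*} [MeasurableSpace Ω] {μ : Measure Ω}
    [IsFiniteMeasure μ] (s : Finset ι) {T : ι → Ω → Ω} (hT : ∀ i, MeasurePreserving (T i) μ μ)
    {A B : Set Ω} [∀ x, DecidablePred fun i ↦ T i x ∈ B] (hA : MeasurableSet A)
    (hB : MeasurableSet B) (hTA : ∀ i, T i ⁻¹' A = A) {c : ℝ}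
    (hc : ∀ x ∈ A, ({i ∈ s | T i x ∈ B}.card : ℝ) ≤ c) :
    s.card * μ.real (A ∩ B) ≤ c * μ.real A := by
  have hTB (i) : MeasurableSet (T i ⁻¹' B) := (hT i).measurable hB
  have hinv (i) : μ.real (A ∩ B) = ∫ x in A, (T i ⁻¹' B).indicator 1 x ∂μ := by
    rw [integral_indicator_one (hTB i), measureReal_restrict_apply (hTB i), Set.inter_comm A,
      ← (hT i).measureReal_preimage (hB.inter hA).nullMeasurableSet, Set.preimage_inter, hTA]
  have hint (i) : Integrable ((T i ⁻¹' B).indicator (1 : Ω → ℝ)) (μ.restrict A) :=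
    (integrable_const 1).indicator (hTB i)
  calc s.card * μ.real (A ∩ B) = ∑ i ∈ s, ∫ x in A, (T i ⁻¹' B).indicator 1 x ∂μ := by
        rw [← Finset.sum_congr rfl fun i _ ↦ hinv i, Finset.sum_const, nsmul_eq_mul]
    _ = ∫ x in A, ∑ i ∈ s, (T i ⁻¹' B).indicator 1 x ∂μ :=
        (integral_finsetSum s fun i _ ↦ hint i).symm
    _ ≤ ∫ _ in A, c ∂μ := by
        refine setIntegral_mono_on (integrable_finsetSum s fun i _ ↦ hint i)
          (integrable_const c) hA fun x hx ↦ (le_of_eq ?_).trans (hc x hx)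
        classical
        simp [Set.indicator_apply]
    _ = c * μ.real A := by rw [setIntegral_const, smul_eq_mul, mul_comm]

lemma card_le_two_mul_add_one_of_abs_add_lt (s : Finset ℤ) {u w : ℝ} (hw : 0 ≤ w)
    (h : ∀ j ∈ s, |(j : ℝ) + u| < w) : (s.card : ℝ) ≤ 2 * w + 1 := by
  have hsub : s ⊆ Finset.Ioo ⌊-u - w⌋ ⌈-u + w⌉ := by
    intro j hj
    obtain ⟨h₁, h₂⟩ := abs_lt.mp (h j hj)
    rw [Finset.mem_Ioo, Int.floor_lt, Int.lt_ceil]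
    constructor <;> linarith
  have hcard : (s.card : ℤ) ≤ max (⌈-u + w⌉ - ⌊-u - w⌋ - 1) 0 := by
    rw [← Int.ofNat_toNat, ← Int.card_Ioo]
    exact_mod_cast Finset.card_le_card hsub
  have hceil := Int.ceil_lt_add_one (-u + w)
  have hfloor := Int.sub_one_lt_floor (-u - w)
  calc (s.card : ℝ) ≤ max (⌈-u + w⌉ - ⌊-u - w⌋ - 1 : ℝ) 0 := mod_cast hcard
    _ ≤ 2 * w + 1 := max_le (by linarith) (by linarith)

lemma card_norm_add_mul_div_lt_le {m : ℕ} (hm : m ≠ 0) (hu : u.Coprime m) (y : UnitAddCircle)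
    (hb : 0 ≤ b) :
    ({k ∈ Finset.range m | ‖y + (((k : ℕ) * (u / m) : ℝ) : UnitAddCircle)‖ < b}.card : ℝ) ≤
      2 * (b * m) + 1 := by
  induction y using QuotientAddGroup.induction_on with | H y =>
  have hm₀ : (0 : ℝ) < m := by positivity
  let z (k : ℕ) : ℝ := y + k * (u / m)
  let j (k : ℕ) : ℤ := u * k - m * round (z k)
  set s :=
    {k ∈ Finset.range m | ‖(y : UnitAddCircle) + (((k : ℕ) * (u / m) : ℝ) : UnitAddCircle)‖ < b}
    with hs
  have hinj : Set.InjOn j s := by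
    intro k hk l hl hkl
    simp only [hs, Finset.coe_filter, Finset.mem_range, Set.mem_ofPred_eq] at hk hl
    have hdvd : (m : ℤ) ∣ u * ((k : ℤ) - l) :=
      ⟨round (z k) - round (z l), by simp only [j] at hkl; linear_combination hkl⟩
    have hkl₀ := Int.eq_zero_of_abs_lt_dvd
      ((Nat.isCoprime_iff_coprime.mpr hu).symm.dvd_of_dvd_mul_left hdvd) (by rw [abs_lt]; lia)
    lia
  rw [← Finset.card_image_of_injOn hinj]
  refine card_le_two_mul_add_one_of_abs_add_lt _ (u := m * y) (by positivity) fun i hi ↦ ?_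
  obtain ⟨k, hk, rfl⟩ := Finset.mem_image.mp hi
  have hzk : |z k - round (z k)| < b := by
    rw [← UnitAddCircle.norm_eq]
    simpa [z] using (Finset.mem_filter.mp hk).2
  have hjk : (j k : ℝ) + m * y = (z k - round (z k)) * m := by
    simp only [j, z]
    push_cast
    field
  rw [hjk, abs_mul, abs_of_pos hm₀]
  exact mul_lt_mul_of_pos_right hzk hm₀

/- The first set is invariant under the rotation by `1 / q`. Averaging over `q / gcd q r` of these
rotations replaces the second set by the number of points `r • x + k * (r / q)` close to `δ`. -/
lemma volume_real_approxSet_inter_le (hq : q ≠ 0) (ha : 0 ≤ a) (hb : 0 ≤ b) :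
    volume.real (approxSet γ q a ∩ approxSet δ r b) ≤ 2 * a * (2 * b + (q.gcd r : ℝ) / q) := by
  classical
  obtain ⟨m, u, hmu, hqm, hru⟩ := Nat.exists_coprime q r
  have hm : m ≠ 0 := by rintro rfl; exact hq (by rw [hqm, zero_mul])
  have hd : (q.gcd r : ℝ) ≠ 0 := mod_cast Nat.gcd_ne_zero_left hq
  have hqmR : (q : ℝ) = m * q.gcd r := mod_cast hqm
  have hruR : (r : ℝ) = u * q.gcd r := mod_cast hru
  let T (k : ℕ) (x : UnitAddCircle) : UnitAddCircle := x + ((k * (1 / q) : ℝ) : UnitAddCircle)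
  have hqT (k x) : q • T k x = q • x := by
    rw [smul_add, ← AddCircle.coe_nsmul, nsmul_eq_mul, mul_left_comm,
      mul_one_div_cancel (mod_cast hq), mul_one, ← nsmul_one, AddCircle.coe_nsmul,
      AddCircle.coe_period, smul_zero, add_zero]
  have hrT (k x) : r • T k x - δ = (r • x - δ) + ((k * (u / m) : ℝ) : UnitAddCircle) := by
    have : (r * (k * (1 / q)) : ℝ) = k * (u / m) := by rw [hqmR, hruR]; field
    rw [smul_add, ← AddCircle.coe_nsmul, nsmul_eq_mul, this, add_sub_right_comm]
  have havg := card_mul_measureReal_inter_le (μ := volume) (Finset.range m) (T := T)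
    (fun k ↦ measurePreserving_add_right _ _) (measurableSet_approxSet (γ := γ) (q := q) (a := a))
    (measurableSet_approxSet (γ := δ) (q := r) (a := b)) (c := 2 * (b * m) + 1)
    (fun k ↦ by ext x; simp only [Set.mem_preimage, mem_approxSet, hqT])
    (fun x _ ↦ by
      simp only [mem_approxSet, hrT]
      exact card_norm_add_mul_div_lt_le hm hmu.symm _ hb)
  rw [Finset.card_range] at havg
  have hvol : volume.real (approxSet γ q a) ≤ 2 * a :=
    (volume_real_approxSet hq ha).trans_le (min_le_right _ _)
  have hm₀ : (0 : ℝ) < m := by positivity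
  refine le_of_mul_le_mul_left ?_ hm₀
  calc m * volume.real (approxSet γ q a ∩ approxSet δ r b)
      ≤ (2 * (b * m) + 1) * (2 * a) := havg.trans (by gcongr)
    _ = m * (2 * a * (2 * b + (q.gcd r : ℝ) / q)) := by rw [hqmR]; field

end ApproxSet

section RationalApproximation

variable {γ α : ℝ}

lemma sigmaExp_nonneg (γ : ℝ) (Q : ℕ) : 0 ≤ sigmaExp γ Q :=
  Real.sInf_nonneg fun _ hσ ↦ hσ.1.le

lemma exists_dnint_lt_rpow_neg {σ : ℝ} {Q : ℕ} (hσ : 0 < σ) (h : σ < sigmaExp γ Q) :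
    ∃ q : ℕ, 2 ≤ q ∧ q ≤ Q ∧ dnint (q * γ) < (q : ℝ) ^ (-σ) := by
  by_contra! hle
  exact h.not_ge (csInf_le ⟨0, fun _ hx ↦ hx.1.le⟩ ⟨hσ, hle⟩)

lemma exists_rat_den_le_mul_abs_sub_eq_dnint (γ : ℝ) {q : ℕ} (hq : q ≠ 0) :
    ∃ ρ : ℚ, ρ.den ≤ q ∧ q * |γ - ρ| = dnint (q * γ) := by
  refine ⟨(round (q * γ) : ℤ) / (q : ℤ), ?_, ?_⟩
  · exact Nat.le_of_dvd (by positivity) (by exact_mod_cast Rat.den_dvd (round (q * γ)) q)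
  · rw [dnint, ← Nat.abs_cast q, ← abs_mul, Nat.abs_cast]
    push_cast
    congr 1
    field

lemma tamelyLiouville_of_isBigO (hα : α < 1 / 4)
    (h : sigmaExp γ =O[atTop] fun Q : ℕ ↦ logb 2 Q ^ α) : TamelyLiouville γ := by
  obtain ⟨C, hC, hle⟩ := Asymptotics.bound_of_isBigO_nat_atTop h
  refine ⟨1 / 4 - α, by linarith, C, hC, fun Q hQ ↦ ?_⟩
  have hpos : 0 < logb 2 Q ^ α := rpow_pos_of_pos (logb_pos one_lt_two (mod_cast hQ)) α
  simpa [abs_of_nonneg (sigmaExp_nonneg γ Q), abs_of_pos hpos] using hle hpos.ne'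

lemma one_le_logb_two {x : ℝ} (hx : 2 ≤ x) : 1 ≤ logb 2 x := by
  rwa [le_logb_iff_rpow_le one_lt_two (two_pos.trans_le hx), rpow_one]

lemma exists_dnint_lt_rpow_logb (hα : 0 ≤ α)
    (hwild : ¬sigmaExp γ =O[atTop] fun Q : ℕ ↦ logb 2 Q ^ α) {K : ℝ} (hK : 0 < K) :
    ∃ q : ℕ, 2 ≤ q ∧ dnint (q * γ) < (q : ℝ) ^ (-(K * logb 2 q ^ α)) := by
  obtain ⟨Q, hQ, hσQ⟩ : ∃ Q : ℕ, 2 ≤ Q ∧ K * logb 2 Q ^ α < sigmaExp γ Q := by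
    by_contra! hle
    refine hwild (.of_bound K ((eventually_ge_atTop 2).mono fun Q hQ ↦ ?_))
    rw [norm_of_nonneg (sigmaExp_nonneg γ Q)]
    exact (hle Q hQ).trans (by gcongr; exact le_norm_self _)
  have hlogQ : 0 < logb 2 Q := one_pos.trans_le (one_le_logb_two (mod_cast hQ))
  obtain ⟨q, hq, hqQ, hlt⟩ := exists_dnint_lt_rpow_neg (by positivity) hσQ
  have hlogq : 0 ≤ logb 2 q := zero_le_one.trans (one_le_logb_two (mod_cast hq))
  refine ⟨q, hq, hlt.trans_le ?_⟩
  gcongr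
  · exact_mod_cast one_le_two.trans hq
  · exact one_lt_two

/- The exponent is so large that `‖qγ‖` beats the distance from `γ` to all rationals of small
denominator, which forces the denominator of the approximation to be large. -/
lemma exists_rat_den_mul_abs_sub_le_rpow (hα : 0 ≤ α) (hγ : Irrational γ)
    (hwild : ¬sigmaExp γ =O[atTop] fun Q : ℕ ↦ logb 2 Q ^ α) (K : ℝ) (n₀ : ℕ) :
    ∃ ρ : ℚ, n₀ < ρ.den ∧
      ρ.den * |γ - ρ| ≤ (ρ.den : ℝ) ^ (-(K * logb 2 ρ.den ^ α)) := by
  obtain ⟨k, hfar⟩ : ∃ k : ℕ, ∀ r : ℚ, r.den ≤ n₀ → (1 / 2 : ℝ) ^ k ≤ dist γ r :=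
    ((tendsto_pow_atTop_nhds_zero_of_lt_one (by norm_num) one_half_lt_one).eventually
      (hγ.eventually_forall_le_dist_cast_rat_of_den_le n₀)).exists
  set K' : ℝ := max K (k + 1)
  have hK' : 0 < K' := lt_max_of_lt_right (by positivity)
  obtain ⟨q, hq, hlt⟩ := exists_dnint_lt_rpow_logb hα hwild hK'
  obtain ⟨ρ, hρq, hρ⟩ := exists_rat_den_le_mul_abs_sub_eq_dnint γ (by lia : q ≠ 0)
  rw [← hρ] at hlt
  have hq₁ : (1 : ℝ) ≤ q := mod_cast one_le_two.trans hq
  have hlogq : 1 ≤ logb 2 q := one_le_logb_two (mod_cast hq)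
  refine ⟨ρ, ?_, ?_⟩
  · contrapose! hlt
    have hk : (k : ℝ) ≤ K' * logb 2 q ^ α :=
      (le_add_of_nonneg_right zero_le_one).trans <| (le_max_right _ _).trans <|
        le_mul_of_one_le_right hK'.le (one_le_rpow hlogq hα)
    calc (q : ℝ) ^ (-(K' * logb 2 q ^ α)) ≤ (q : ℝ) ^ (-(k : ℝ)) := by gcongr
      _ = (1 / (q : ℝ)) ^ k := by rw [rpow_neg (by positivity), rpow_natCast, one_div, inv_pow]
      _ ≤ (1 / 2) ^ k := by gcongr; exact_mod_cast hq
      _ ≤ |γ - ρ| := hfar ρ hlt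
      _ ≤ q * |γ - ρ| := le_mul_of_one_le_left (abs_nonneg _) hq₁
  · have hden : (1 : ℝ) ≤ ρ.den := mod_cast ρ.den_pos
    have hlogden : 0 ≤ logb 2 ρ.den := logb_nonneg one_lt_two hden
    calc ρ.den * |γ - ρ| ≤ q * |γ - ρ| := by gcongr
      _ ≤ (q : ℝ) ^ (-(K' * logb 2 q ^ α)) := hlt.le
      _ ≤ (ρ.den : ℝ) ^ (-(K' * logb 2 q ^ α)) :=
          rpow_le_rpow_of_nonpos (by positivity) (mod_cast hρq) (neg_nonpos.mpr (by positivity))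
      _ ≤ (ρ.den : ℝ) ^ (-(K * logb 2 ρ.den ^ α)) := by
          gcongr ?_ ^ (-(?_ * ?_ ^ _))
          · exact le_max_left _ _
          · exact logb_le_logb_of_le one_lt_two (by positivity) (mod_cast hρq)

end RationalApproximation

section Counting

lemma sum_Ioc_one_div_eq_harmonic (n : ℕ) :
    ∑ j ∈ Finset.Ioc 0 n, (1 : ℝ) / j = (harmonic n : ℝ) := by
  rw [harmonic_eq_sum_Icc]
  push_cast
  simp only [one_div]
  rfl

lemma sum_Ioc_one_div_le_one_add_log {k n : ℕ} {M : ℝ} (hM : 1 ≤ M) (hkn : k ≤ n)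
    (hk : n ≤ M * (k + 1)) : ∑ j ∈ Finset.Ioc k n, (1 : ℝ) / j ≤ 1 + log M := by
  have hsplit : (harmonic k : ℝ) + ∑ j ∈ Finset.Ioc k n, (1 : ℝ) / j = harmonic n := by
    rw [← sum_Ioc_one_div_eq_harmonic, ← sum_Ioc_one_div_eq_harmonic]
    exact Finset.sum_Ioc_consecutive _ k.zero_le hkn
  have hlog : log n ≤ log M + log ↑(k + 1) := by
    rw [← log_mul (by positivity) (by positivity)]
    obtain rfl | hn := n.eq_zero_or_pos
    · simpa using log_nonneg (one_le_mul_of_one_le_of_one_le hM (by simp : 1 ≤ (k + 1 : ℝ)))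
    · exact log_le_log (by positivity) (by push_cast; exact hk)
  linarith [harmonic_le_one_add_log n, log_add_one_le_harmonic k]

lemma sum_min_div_le {M r b : ℝ} (n : ℕ) (hM : 1 ≤ M) (hr : 0 ≤ r) (hb : 0 ≤ b) :
    ∑ j ∈ Finset.Ioc 0 n, min r (b / j) ≤ r * (n / M) + b * (1 + log M) := by
  have hM₀ : 0 < M := one_pos.trans_le hM
  set k := ⌊(n : ℝ) / M⌋₊
  have hkM : (k : ℝ) ≤ n / M := Nat.floor_le (by positivity)
  have hkn : k ≤ n := by exact_mod_cast hkM.trans (div_le_self n.cast_nonneg hM)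
  have hk : n ≤ M * (k + 1) := by
    rw [← div_le_iff₀' hM₀]
    exact (Nat.lt_floor_add_one _).le
  calc ∑ j ∈ Finset.Ioc 0 n, min r (b / j)
      = ∑ j ∈ Finset.Ioc 0 k, min r (b / j) + ∑ j ∈ Finset.Ioc k n, min r (b / j) :=
        (Finset.sum_Ioc_consecutive _ k.zero_le hkn).symm
    _ ≤ ∑ _j ∈ Finset.Ioc 0 k, r + ∑ j ∈ Finset.Ioc k n, b * (1 / j) := by
        gcongr
        · exact min_le_left _ _
        · exact (min_le_right _ _).trans_eq (by ring)
    _ = r * k + b * ∑ j ∈ Finset.Ioc k n, (1 : ℝ) / j := by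
        rw [Finset.mul_sum, Finset.sum_const, Nat.card_Ioc, nsmul_eq_mul, mul_comm, tsub_zero]
    _ ≤ r * (n / M) + b * (1 + log M) := by
        gcongr
        exact sum_Ioc_one_div_le_one_add_log hM hkn hk

lemma two_mul_abs_bmod_le (a : ℤ) {n : ℕ} (hn : n ≠ 0) : 2 * |a.bmod n| ≤ n := by
  have hlo := Int.le_bmod (x := a) (m := n) (by lia)
  have hhi := Int.bmod_lt (x := a) (m := n) (by lia)
  cases abs_cases (a.bmod n) <;> lia

lemma abs_bmod_le_abs_sub_mul (a k : ℤ) {n : ℕ} (hn : n ≠ 0) : |a.bmod n| ≤ |a - n * k| := by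
  obtain ⟨m, hm⟩ : ∃ m : ℤ, a - n * k = n * m + a.bmod n :=
    ⟨a.bdiv n - k, by linear_combination -a.bmod_add_bdiv n⟩
  rw [hm]
  obtain rfl | hm₀ := eq_or_ne m 0
  · simp
  have hn_le : (n : ℤ) ≤ |n * m| := by
    rw [abs_mul, Nat.abs_cast]
    exact le_mul_of_one_le_right (by positivity) (Int.one_le_abs hm₀)
  linarith [two_mul_abs_bmod_le a hn, abs_sub_abs_le_abs_add (n * m) (a.bmod n)]

lemma card_le_div_add_one_of_modEq {s : Finset ℕ} {n : ℕ} {Z : ℝ} (hZ : 0 ≤ Z)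
    (hsZ : ∀ q ∈ s, (q : ℝ) ≤ Z) (hs : ∀ q ∈ s, ∀ p ∈ s, q ≡ p [MOD n]) :
    (s.card : ℝ) ≤ Z / n + 1 := by
  have hcard : s.card ≤ (Finset.range (⌊Z⌋₊ / n + 1)).card := by
    refine Finset.card_le_card_of_injOn (· / n) (fun q hq ↦ ?_) fun q hq p hp hqp ↦ ?_
    · simp only [Finset.coe_range, Set.mem_Iio]
      exact Nat.lt_succ_of_le (Nat.div_le_div_right (Nat.le_floor (hsZ q hq)))
    · rw [← Nat.div_add_mod q n, ← Nat.div_add_mod p n, show q / n = p / n from hqp, hs q hq p hp]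
  rw [Finset.card_range] at hcard
  calc (s.card : ℝ) ≤ (⌊Z⌋₊ / n : ℕ) + 1 := mod_cast hcard
    _ ≤ ⌊Z⌋₊ / n + 1 := by gcongr; exact Nat.cast_div_le
    _ ≤ Z / n + 1 := by gcongr; exact Nat.floor_le hZ

lemma card_filter_dvd_sub_le (n r : ℕ) :
    ({q ∈ Finset.Ico 1 r | n ∣ r - q}.card : ℝ) ≤ r / n := by
  have hcard : {q ∈ Finset.Ico 1 r | n ∣ r - q}.card ≤ {p ∈ Finset.Ioc 0 r | n ∣ p}.card := by
    refine Finset.card_le_card_of_injOn (r - ·) (fun q hq ↦ ?_) fun q hq p hp hqp ↦ ?_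
    · simp only [Finset.coe_filter, Finset.mem_Ico, Finset.mem_Ioc, Set.mem_ofPred_eq] at hq ⊢
      exact ⟨by lia, hq.2⟩
    · simp only [Finset.coe_filter, Finset.mem_Ico, Set.mem_ofPred_eq] at hq hp hqp
      lia
  rw [Nat.Ioc_filter_dvd_card_eq_div] at hcard
  exact (Nat.cast_le.mpr hcard).trans Nat.cast_div_le

section ResidueCount

variable {c : ℤ} {n : ℕ} {X : ℝ}

lemma card_filter_bmod_eq_zero_le (hc : IsCoprime c n) (r : ℕ) :
    ({q ∈ Finset.Ico 1 r | (((r : ℤ) - (q : ℕ)) * c).bmod n = 0}.card : ℝ) ≤ r / n := by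
  refine le_trans (Nat.cast_le.mpr (Finset.card_le_card fun q hq ↦ ?_)) (card_filter_dvd_sub_le n r)
  simp only [Finset.mem_filter, Finset.mem_Ico] at hq ⊢
  refine ⟨hq.1, ?_⟩
  have hdvd := hc.symm.dvd_of_dvd_mul_right (Int.dvd_iff_bmod_eq_zero.mpr hq.2)
  rw [← Nat.cast_sub hq.1.2.le] at hdvd
  exact_mod_cast hdvd

lemma card_filter_bmod_eq_le (hc : IsCoprime c n) (hX : 0 ≤ X) (r : ℕ) {j : ℤ} (hj : j ≠ 0) :
    ({q ∈ Finset.Ico 1 r | (((r : ℤ) - (q : ℕ)) * c).bmod n = j ∧ |(j : ℝ)| * q < X}.card : ℝ) ≤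
      min (r : ℝ) (X / |(j : ℝ)|) / n + 1 := by
  have hj₀ : 0 < |(j : ℝ)| := by positivity
  refine card_le_div_add_one_of_modEq (by positivity) (fun q hq ↦ ?_) fun q hq p hp ↦ ?_
  · simp only [Finset.mem_filter, Finset.mem_Ico] at hq
    exact le_min (mod_cast hq.1.2.le) ((le_div_iff₀' hj₀).mpr hq.2.2.le)
  · simp only [Finset.mem_filter] at hq hp
    have hq' := Int.dvd_self_sub_bmod (x := ((r : ℤ) - q) * c) (m := n)
    have hp' := Int.dvd_self_sub_bmod (x := ((r : ℤ) - p) * c) (m := n)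
    rw [hq.2.1] at hq'
    rw [hp.2.1] at hp'
    refine Nat.modEq_iff_dvd.mpr (hc.symm.dvd_of_dvd_mul_right ?_)
    convert hq'.sub hp' using 1
    ring

lemma card_filter_natAbs_bmod_eq_le (hc : IsCoprime c n) (hX : 0 ≤ X) (r : ℕ) {j : ℕ}
    (hj : j ≠ 0) :
    ({q ∈ Finset.Ico 1 r |
      ((((r : ℤ) - (q : ℕ)) * c).bmod n).natAbs = j ∧ (j : ℝ) * q < X}.card : ℝ) ≤
      2 / n * min (r : ℝ) (X / j) + 2 := by
  classical
  let s (i : ℤ) : Finset ℕ :=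
    {q ∈ Finset.Ico 1 r | (((r : ℤ) - (q : ℕ)) * c).bmod n = i ∧ |(i : ℝ)| * q < X}
  have hsub : {q ∈ Finset.Ico 1 r |
      ((((r : ℤ) - (q : ℕ)) * c).bmod n).natAbs = j ∧ (j : ℝ) * q < X} ⊆ s j ∪ s (-j) := by
    intro q
    simp only [s, Finset.mem_union, Finset.mem_filter, Int.cast_neg, abs_neg, Int.cast_natCast,
      Nat.abs_cast, Int.natAbs_eq_iff]
    tauto
  have hpos := card_filter_bmod_eq_le hc hX r (j := j) (mod_cast hj)
  have hneg := card_filter_bmod_eq_le hc hX r (j := -j) (by simpa using hj)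
  simp only [Int.cast_neg, abs_neg, Int.cast_natCast, Nat.abs_cast] at hpos hneg
  calc _ ≤ ((s j).card + (s (-j)).card : ℝ) := by
        exact_mod_cast (Finset.card_le_card hsub).trans (Finset.card_union_le _ _)
    _ ≤ (min (r : ℝ) (X / j) / n + 1) + (min (r : ℝ) (X / j) / n + 1) := by
        simp only [s, Int.cast_neg, abs_neg, Int.cast_natCast, Nat.abs_cast]
        exact add_le_add hpos hneg
    _ = 2 / n * min (r : ℝ) (X / j) + 2 := by ring

lemma card_filter_bmod_ne_zero_le (hc : IsCoprime c n) (hn : n ≠ 0) (hX : 0 ≤ X) (r : ℕ) :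
    ({q ∈ Finset.Ico 1 r | (((r : ℤ) - (q : ℕ)) * c).bmod n ≠ 0 ∧
      (|(((r : ℤ) - (q : ℕ)) * c).bmod n| : ℝ) * q < X}.card : ℝ) ≤
      2 / n * ∑ j ∈ Finset.Ioc 0 n, min (r : ℝ) (X / j) + 2 * n := by
  set t : ℕ → ℤ := fun q ↦ (((r : ℤ) - q) * c).bmod n
  set s := {q ∈ Finset.Ico 1 r | t q ≠ 0 ∧ (|t q| : ℝ) * q < X}
  have hmaps : ∀ q ∈ s, (t q).natAbs ∈ Finset.Ioc 0 n := by
    intro q hq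
    have htn : 2 * |t q| ≤ n := two_mul_abs_bmod_le _ hn
    rw [Int.abs_eq_natAbs] at htn
    rw [Finset.mem_Ioc]
    exact ⟨Int.natAbs_pos.mpr (Finset.mem_filter.mp hq).2.1, by lia⟩
  have hfiber (j) (hj : j ∈ Finset.Ioc 0 n) :
      ({q ∈ s | (t q).natAbs = j}.card : ℝ) ≤ 2 / n * min (r : ℝ) (X / j) + 2 := by
    refine le_trans (Nat.cast_le.mpr (Finset.card_le_card fun q hq ↦ ?_))
      (card_filter_natAbs_bmod_eq_le hc hX r (Finset.mem_Ioc.mp hj).1.ne')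
    simp only [s, Finset.mem_filter] at hq ⊢
    refine ⟨hq.1.1, hq.2, ?_⟩
    rw [← hq.2, Nat.cast_natAbs, Int.cast_abs]
    exact hq.1.2.2
  calc (s.card : ℝ) ≤ ∑ j ∈ Finset.Ioc 0 n, (2 / n * min (r : ℝ) (X / j) + 2) := by
        rw [Finset.card_eq_sum_card_fiberwise hmaps]
        push_cast
        exact Finset.sum_le_sum hfiber
    _ = 2 / n * ∑ j ∈ Finset.Ioc 0 n, min (r : ℝ) (X / j) + 2 * n := by
        rw [Finset.sum_add_distrib, ← Finset.mul_sum, Finset.sum_const, Nat.card_Ioc,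
          nsmul_eq_mul, mul_comm (2 : ℝ) n, tsub_zero]

lemma card_filter_abs_bmod_mul_lt_le_sum (hc : IsCoprime c n) (hn : n ≠ 0) (hX : 0 ≤ X) {r : ℕ}
    (hXr : 1 < X → n ^ 2 ≤ r) :
    ({q ∈ Finset.Ico 1 r | (|(((r : ℤ) - (q : ℕ)) * c).bmod n| : ℝ) * q < X}.card : ℝ) ≤
      3 * (r / n) + 2 / n * ∑ j ∈ Finset.Ioc 0 n, min (r : ℝ) (X / j) := by
  set t : ℕ → ℤ := fun q ↦ (((r : ℤ) - q) * c).bmod n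
  have hzero : ({q ∈ Finset.Ico 1 r | t q = 0}.card : ℝ) ≤ r / n := card_filter_bmod_eq_zero_le hc r
  obtain hX₁ | hX₁ := le_or_gt X 1
  · have hsub : {q ∈ Finset.Ico 1 r | (|t q| : ℝ) * q < X} ⊆
        {q ∈ Finset.Ico 1 r | t q = 0} := by
      refine Finset.monotone_filter_right _ fun q hq hlt ↦ ?_
      by_contra ht
      have ht₁ : (1 : ℝ) ≤ |(t q : ℝ)| := mod_cast Int.one_le_abs ht
      have hq₁ : (1 : ℝ) ≤ q := mod_cast (Finset.mem_Ico.mp hq).1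
      exact (hlt.trans_le hX₁).not_ge (one_le_mul_of_one_le_of_one_le ht₁ hq₁)
    have hsum : 0 ≤ 2 / (n : ℝ) * ∑ j ∈ Finset.Ioc 0 n, min (r : ℝ) (X / j) := by positivity
    have hcard : ({q ∈ Finset.Ico 1 r | (|t q| : ℝ) * q < X}.card : ℝ) ≤
        {q ∈ Finset.Ico 1 r | t q = 0}.card :=
      Nat.cast_le.mpr (Finset.card_le_card hsub)
    linarith [show (0 : ℝ) ≤ r / n by positivity]
  · have hsub : {q ∈ Finset.Ico 1 r | (|t q| : ℝ) * q < X} ⊆ {q ∈ Finset.Ico 1 r | t q = 0} ∪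
        {q ∈ Finset.Ico 1 r | t q ≠ 0 ∧ (|t q| : ℝ) * q < X} := by
      grind
    have hcard : ({q ∈ Finset.Ico 1 r | (|t q| : ℝ) * q < X}.card : ℝ) ≤
        {q ∈ Finset.Ico 1 r | t q = 0}.card +
          {q ∈ Finset.Ico 1 r | t q ≠ 0 ∧ (|t q| : ℝ) * q < X}.card :=
      mod_cast (Finset.card_le_card hsub).trans (Finset.card_union_le _ _)
    have hnr : (n : ℝ) ≤ r / n := by
      rw [le_div_iff₀ (by positivity), ← sq]
      exact_mod_cast hXr hX₁
    linarith [card_filter_bmod_ne_zero_le hc hn hX r]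

lemma card_filter_abs_bmod_mul_lt_le (hc : IsCoprime c n) (hX : 0 ≤ X) {r : ℕ}
    (hXr : 1 < X → n ^ 2 ≤ r) {M : ℝ} (hM : 1 ≤ M) (hMn : M ≤ n) :
    ({q ∈ Finset.Ico 1 r | (|(((r : ℤ) - (q : ℕ)) * c).bmod n| : ℝ) * q < X}.card : ℝ) ≤
      5 * r / M + 2 * X / n * (1 + log M) := by
  have hn₀ : (0 : ℝ) < n := by linarith
  have hn : n ≠ 0 := by rintro rfl; simp at hn₀
  calc _ ≤ 3 * (r / n) + 2 / n * ∑ j ∈ Finset.Ioc 0 n, min (r : ℝ) (X / j) :=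
        card_filter_abs_bmod_mul_lt_le_sum hc hn hX hXr
    _ ≤ 3 * (r / M) + 2 / n * (r * (n / M) + X * (1 + log M)) := by
        gcongr
        exact sum_min_div_le n hM r.cast_nonneg hX
    _ = 5 * r / M + 2 * X / n * (1 + log M) := by field

end ResidueCount

end Counting

section DivisorSums

lemma sum_Ioc_card_divisors_div_le (N : ℕ) :
    ∑ r ∈ Finset.Ioc 0 N, (r.divisors.card : ℝ) / r ≤ (1 + log N) ^ 2 := by
  let f : ArithmeticFunction ℝ := ⟨fun n ↦ 1 / n, by simp⟩
  have hconv (r : ℕ) : (r.divisors.card : ℝ) / r = (f * f) r := by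
    rw [ArithmeticFunction.mul_apply, Nat.sum_divisorsAntidiagonal (fun d e ↦ f d * f e),
      div_eq_mul_one_div, ← nsmul_eq_mul, ← Finset.sum_const]
    refine Finset.sum_congr rfl fun d hd ↦ ?_
    have hdr : (d : ℝ) * (r / d : ℕ) = r :=
      mod_cast Nat.mul_div_cancel' (Nat.dvd_of_mem_divisors hd)
    simp only [f, ArithmeticFunction.coe_mk, one_div_mul_one_div, hdr]
  have hf (n : ℕ) : 0 ≤ f n := by
    simp only [f, ArithmeticFunction.coe_mk]
    positivity
  calc ∑ r ∈ Finset.Ioc 0 N, (r.divisors.card : ℝ) / r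
      = ∑ p ∈ Finset.Ioc 0 N ×ˢ Finset.Ioc 0 N with p.1 * p.2 ≤ N, f p.1 * f p.2 := by
        rw [← ArithmeticFunction.sum_Ioc_mul_eq_sum_prod_filter]
        exact Finset.sum_congr rfl fun r _ ↦ hconv r
    _ ≤ ∑ p ∈ Finset.Ioc 0 N ×ˢ Finset.Ioc 0 N, f p.1 * f p.2 :=
        Finset.sum_le_sum_of_subset_of_nonneg (Finset.filter_subset _ _)
          fun p _ _ ↦ mul_nonneg (hf _) (hf _)
    _ = (harmonic N : ℝ) ^ 2 := by
        rw [Finset.sum_product, ← Finset.sum_mul_sum, ← sq]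
        exact congrArg (· ^ 2) (sum_Ioc_one_div_eq_harmonic N)
    _ ≤ (1 + log N) ^ 2 := by
        rw [← sum_Ioc_one_div_eq_harmonic]
        gcongr
        rw [sum_Ioc_one_div_eq_harmonic]
        exact harmonic_le_one_add_log N

lemma sum_divisors_one_div_le (r : ℕ) {M : ℝ} (hM : 1 ≤ M) :
    ∑ d ∈ r.divisors, (1 : ℝ) / d ≤ 1 + log M + r.divisors.card / M := by
  have hM₀ : 0 < M := one_pos.trans_le hM
  have hsmall : ∑ d ∈ r.divisors with d ≤ ⌊M⌋₊, (1 : ℝ) / d ≤ 1 + log M := by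
    refine le_trans ?_ (harmonic_floor_le_one_add_log M hM)
    rw [← sum_Ioc_one_div_eq_harmonic]
    refine Finset.sum_le_sum_of_subset_of_nonneg (fun d hd ↦ ?_) fun _ _ _ ↦ by positivity
    rw [Finset.mem_filter] at hd
    exact Finset.mem_Ioc.mpr ⟨Nat.pos_of_mem_divisors hd.1, hd.2⟩
  have hlarge : ∑ d ∈ r.divisors with ¬d ≤ ⌊M⌋₊, (1 : ℝ) / d ≤ r.divisors.card / M := by
    calc ∑ d ∈ r.divisors with ¬d ≤ ⌊M⌋₊, (1 : ℝ) / d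
        ≤ ({d ∈ r.divisors | ¬d ≤ ⌊M⌋₊}.card : ℝ) * (1 / M) := by
          rw [← nsmul_eq_mul]
          refine Finset.sum_le_card_nsmul _ _ _ fun d hd ↦ ?_
          have := (Nat.floor_lt hM₀.le).mp (not_le.mp (Finset.mem_filter.mp hd).2)
          gcongr
      _ ≤ r.divisors.card / M := by
          rw [mul_one_div]
          gcongr
          exact Finset.filter_subset _ _
  rw [← Finset.sum_filter_add_sum_filter_not r.divisors (· ≤ ⌊M⌋₊)]
  exact add_le_add hsmall hlarge

lemma sum_divisors_div_add_mul_one_div_le (r : ℕ) {a b M : ℝ} (hb : 0 ≤ b) (hM : 1 ≤ M) :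
    ∑ d ∈ r.divisors, (a / M + b / (1 + log M) * (1 / d)) ≤
      b + (a + b) * r.divisors.card / M := by
  have hlogM : 0 ≤ log M := log_nonneg hM
  calc ∑ d ∈ r.divisors, (a / M + b / (1 + log M) * (1 / d))
      = r.divisors.card * (a / M) + b / (1 + log M) * ∑ d ∈ r.divisors, (1 : ℝ) / d := by
        rw [Finset.sum_add_distrib, ← Finset.mul_sum, Finset.sum_const, nsmul_eq_mul]
    _ ≤ r.divisors.card * (a / M) + b / (1 + log M) * (1 + log M + r.divisors.card / M) := by
        gcongr
        exact sum_divisors_one_div_le r hM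
    _ = r.divisors.card * (a / M) + b + b / (1 + log M) * (r.divisors.card / M) := by field
    _ ≤ r.divisors.card * (a / M) + b + b * (r.divisors.card / M) := by
        gcongr
        exact div_le_self hb (le_add_of_nonneg_right hlogM)
    _ = b + (a + b) * r.divisors.card / M := by ring

end DivisorSums

section Window

lemma abs_bmod_mul_num_le (γ : ℝ) (ρ : ℚ) (k m : ℤ) :
    (|(k * ρ.num).bmod ρ.den| : ℝ) ≤ ρ.den * (|k * γ - m| + |(k : ℝ)| * |γ - ρ|) := by
  have hρ : (ρ.den : ℝ) * ρ = ρ.num := by exact_mod_cast ρ.den_mul_eq_num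
  calc (|(k * ρ.num).bmod ρ.den| : ℝ) ≤ |(k * ρ.num - ρ.den * m : ℤ)| :=
        mod_cast abs_bmod_le_abs_sub_mul (k * ρ.num) m ρ.den_ne_zero
    _ = |(ρ.den : ℝ) * ((k * γ - m) - k * (γ - ρ))| := by
        push_cast
        rw [← hρ]
        congr 1
        ring
    _ ≤ ρ.den * (|k * γ - m| + |(k : ℝ)| * |γ - ρ|) := by
        rw [abs_mul, Nat.abs_cast, ← abs_mul]
        gcongr
        exact abs_sub _ _

/-- On the window `[Q, N]` the function `ψ` is so small, and `γ` so close to the rational `ρ`, that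
`‖kγ‖` may be replaced by `‖kρ‖` when estimating overlaps of the sets `approxSet γ q (ψ q)`.
The parameter `M` is the cut-off between small and large divisors. -/
structure IsResonantWindow (ψ : ℕ → ℝ) (γ : ℝ) (ρ : ℚ) (Q N : ℕ) (C M : ℝ) : Prop where
  pos : 0 < C
  one_le : 1 ≤ M
  le_den : M ≤ ρ.den
  nonneg : ∀ q, Q ≤ q → 0 ≤ ψ q
  le_div : ∀ q, Q ≤ q → ψ q ≤ C / (q * (1 + log M) ^ 2)
  le_left : 4 * C * ρ.den ^ 5 ≤ Q
  mul_abs_sub_le : N * |γ - ρ| ≤ 2 * C / (1 + log M) ^ 2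
  sq_one_add_log_le : (1 + log N) ^ 2 ≤ M

namespace IsResonantWindow

variable {ψ : ℕ → ℝ} {γ : ℝ} {ρ : ℚ} {Q N : ℕ} {C M : ℝ}

lemma one_le_one_add_log (h : IsResonantWindow ψ γ ρ Q N C M) : 1 ≤ 1 + log M :=
  le_add_of_nonneg_right (log_nonneg h.one_le)

lemma four_mul_le (h : IsResonantWindow ψ γ ρ Q N C M) : 4 * C ≤ Q := by
  refine le_trans ?_ h.le_left
  have := h.pos
  exact le_mul_of_one_le_right (by positivity) (one_le_pow₀ (h.one_le.trans h.le_den))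

lemma pos_of_le (h : IsResonantWindow ψ γ ρ Q N C M) {q : ℕ} (hq : Q ≤ q) : 0 < q := by
  have hQ : (0 : ℝ) < Q := (mul_pos four_pos h.pos).trans_le h.four_mul_le
  exact (Nat.cast_pos.mp hQ).trans_le hq

lemma le_div_self (h : IsResonantWindow ψ γ ρ Q N C M) {q : ℕ} (hq : Q ≤ q) : ψ q ≤ C / q := by
  have := h.pos
  have := h.pos_of_le hq
  refine (h.le_div q hq).trans ?_
  gcongr
  exact le_mul_of_one_le_right (by positivity) (one_le_pow₀ h.one_le_one_add_log)

lemma volume_real_approxSet_eq (h : IsResonantWindow ψ γ ρ Q N C M) {q : ℕ} (hq : Q ≤ q) :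
    volume.real (approxSet γ q (ψ q)) = 2 * ψ q := by
  have hq₀ := h.pos_of_le hq
  have hle : ψ q ≤ 1 / 4 := by
    refine (h.le_div_self hq).trans ?_
    rw [div_le_div_iff₀ (by positivity) four_pos]
    have : (Q : ℝ) ≤ q := mod_cast hq
    linarith [h.four_mul_le]
  rw [volume_real_approxSet hq₀.ne' (h.nonneg q hq), min_eq_right (by linarith)]

lemma norm_nsmul_sub_nsmul_lt_div (h : IsResonantWindow ψ γ ρ Q N C M) {d q r : ℕ} (hd : 0 < d)
    (hq : 0 < q) (hqr : q < r) (hQ : Q ≤ d * q)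
    (hne : (approxSet γ (d * q) (ψ (d * q)) ∩ approxSet γ (d * r) (ψ (d * r))).Nonempty) :
    ‖r • (γ : UnitAddCircle) - q • (γ : UnitAddCircle)‖ <
      2 * C * r / (d * q * (1 + log M) ^ 2) := by
  obtain ⟨x, hxq, hxr⟩ := hne
  have hC := h.pos
  have hL := h.one_le_one_add_log
  have hr : (0 : ℝ) < r := mod_cast hq.trans hqr
  have hQr : Q ≤ d * r := hQ.trans (by gcongr)
  have hψq := h.le_div _ hQ
  have hψr := h.le_div _ hQr
  push_cast at hψq hψr
  calc ‖r • (γ : UnitAddCircle) - q • (γ : UnitAddCircle)‖ < r * ψ (d * q) + q * ψ (d * r) :=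
        norm_nsmul_sub_nsmul_lt (by ring) (by lia) hxq hxr
    _ ≤ r * (C / (d * q * (1 + log M) ^ 2)) + r * (C / (d * q * (1 + log M) ^ 2)) := by
        refine add_le_add (by gcongr) (mul_le_mul (by gcongr) (hψr.trans ?_) ?_ hr.le)
        · gcongr
        · exact h.nonneg _ hQr
    _ = 2 * C * r / (d * q * (1 + log M) ^ 2) := by ring

lemma abs_bmod_mul_lt (h : IsResonantWindow ψ γ ρ Q N C M) {d q r : ℕ} (hd : 0 < d)
    (hq : 0 < q) (hqr : q < r) (hQ : Q ≤ d * q) (hN : d * r ≤ N)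
    (hne : (approxSet γ (d * q) (ψ (d * q)) ∩ approxSet γ (d * r) (ψ (d * r))).Nonempty) :
    (|(((r : ℤ) - q) * ρ.num).bmod ρ.den| : ℝ) * q <
      4 * C * ρ.den * r / (d * (1 + log M) ^ 2) := by
  have hC := h.pos
  have hL := h.one_le_one_add_log
  have hq₀ : (0 : ℝ) < q := mod_cast hq
  have hqrR : (q : ℝ) < r := mod_cast hqr
  have hn : (0 : ℝ) < ρ.den := mod_cast ρ.den_pos
  have hnorm := h.norm_nsmul_sub_nsmul_lt_div hd hq hqr hQ hne
  rw [← AddCircle.coe_nsmul, ← AddCircle.coe_nsmul, ← AddCircle.coe_sub, UnitAddCircle.norm_eq,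
    nsmul_eq_mul, nsmul_eq_mul, ← sub_mul] at hnorm
  have hdist : r * |γ - ρ| ≤ 2 * C * r / (d * q * (1 + log M) ^ 2) := by
    have hdq : (d * q : ℝ) ≤ N := mod_cast (Nat.mul_le_mul_left d hqr.le).trans hN
    have := (mul_le_mul_of_nonneg_right hdq (abs_nonneg (γ - ρ))).trans h.mul_abs_sub_le
    rw [le_div_iff₀ (by positivity)] at this ⊢
    calc r * |γ - ρ| * (d * q * (1 + log M) ^ 2) = r * (d * q * |γ - ρ| * (1 + log M) ^ 2) := by
          ring
      _ ≤ r * (2 * C) := by gcongr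
      _ = 2 * C * r := by ring
  have hbmod := abs_bmod_mul_num_le γ ρ ((r : ℤ) - q) (round ((r - q) * γ))
  push_cast at hbmod
  rw [abs_of_pos (sub_pos.mpr hqrR)] at hbmod
  calc (|(((r : ℤ) - q) * ρ.num).bmod ρ.den| : ℝ) * q
      ≤ ρ.den * (|(r - q) * γ - round ((r - q) * γ)| + r * |γ - ρ|) * q := by
        refine mul_le_mul_of_nonneg_right (hbmod.trans ?_) hq₀.le
        gcongr
        linarith
    _ < ρ.den * (2 * C * r / (d * q * (1 + log M) ^ 2) +
          2 * C * r / (d * q * (1 + log M) ^ 2)) * q := by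
        refine mul_lt_mul_of_pos_right (mul_lt_mul_of_pos_left ?_ hn) hq₀
        exact add_lt_add_of_lt_of_le hnorm hdist
    _ = 4 * C * ρ.den * r / (d * (1 + log M) ^ 2) := by field

lemma sq_den_le (h : IsResonantWindow ψ γ ρ Q N C M) {d r : ℕ} (hd : 0 < d) (hQ : Q ≤ d * r)
    (hX : 1 < 4 * C * ρ.den * r / (d * (1 + log M) ^ 2)) : ρ.den ^ 2 ≤ r := by
  have hC := h.pos
  have hL := h.one_le_one_add_log
  have hn : (0 : ℝ) < ρ.den := mod_cast ρ.den_pos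
  have hr : (0 : ℝ) < r := mod_cast pos_of_mul_pos_right (h.pos_of_le hQ) hd.le
  have hd_lt : (d : ℝ) < 4 * C * ρ.den * r := by
    rw [one_lt_div (by positivity)] at hX
    exact (le_mul_of_one_le_right d.cast_nonneg (one_le_pow₀ hL)).trans_lt hX
  have hlt : 4 * C * ρ.den * ((ρ.den : ℝ) ^ 2) ^ 2 < 4 * C * ρ.den * (r : ℝ) ^ 2 := by
    calc 4 * C * ρ.den * ((ρ.den : ℝ) ^ 2) ^ 2 = 4 * C * ρ.den ^ 5 := by ring
      _ ≤ (d * r : ℝ) := h.le_left.trans (mod_cast hQ)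
      _ < 4 * C * ρ.den * r * r := by gcongr
      _ = 4 * C * ρ.den * r ^ 2 := by ring
  exact_mod_cast (lt_of_pow_lt_pow_left₀ 2 hr.le (lt_of_mul_lt_mul_left hlt (by positivity))).le

lemma card_filter_gcd_eq_nonempty_le (h : IsResonantWindow ψ γ ρ Q N C M) {d r : ℕ} (hd : 0 < d)
    (hQ : Q ≤ d * r) (hN : d * r ≤ N)
    [DecidablePred fun q ↦ (approxSet γ q (ψ q) ∩ approxSet γ (d * r) (ψ (d * r))).Nonempty] :
    ({q ∈ Finset.Ico Q (d * r) | q.gcd (d * r) = d ∧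
      (approxSet γ q (ψ q) ∩ approxSet γ (d * r) (ψ (d * r))).Nonempty}.card : ℝ) ≤
      r * (5 / M + 8 * C / (1 + log M) * (1 / d)) := by
  have hC := h.pos
  have hL := h.one_le_one_add_log
  set X := 4 * C * ρ.den * r / (d * (1 + log M) ^ 2) with hX
  have hsub : {q ∈ Finset.Ico Q (d * r) | q.gcd (d * r) = d ∧
      (approxSet γ q (ψ q) ∩ approxSet γ (d * r) (ψ (d * r))).Nonempty} ⊆
      Finset.image (d * ·) {q ∈ Finset.Ico 1 r |
        (|(((r : ℤ) - (q : ℕ)) * ρ.num).bmod ρ.den| : ℝ) * q < X} := by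
    intro q hq
    simp only [Finset.mem_filter, Finset.mem_Ico, Finset.mem_image] at hq ⊢
    obtain ⟨⟨hQq, hqr⟩, hgcd, hne⟩ := hq
    obtain ⟨p, rfl⟩ : d ∣ q := hgcd ▸ Nat.gcd_dvd_left q _
    have hp : 0 < p := pos_of_mul_pos_right (h.pos_of_le hQq) hd.le
    have hpr : p < r := lt_of_mul_lt_mul_left hqr hd.le
    exact ⟨p, ⟨⟨hp, hpr⟩, h.abs_bmod_mul_lt hd hp hpr hQq hN hne⟩, rfl⟩
  calc _ ≤ _ := Nat.cast_le.mpr ((Finset.card_le_card hsub).trans Finset.card_image_le)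
    _ ≤ 5 * r / M + 2 * X / ρ.den * (1 + log M) :=
        card_filter_abs_bmod_mul_lt_le (Rat.isCoprime_num_den ρ) (by positivity)
          (h.sq_den_le hd hQ) h.one_le h.le_den
    _ = r * (5 / M + 8 * C / (1 + log M) * (1 / d)) := by rw [hX]; field

lemma sum_gcd_div_filter_nonempty_le (h : IsResonantWindow ψ γ ρ Q N C M) {r : ℕ} (hQ : Q ≤ r)
    (hN : r ≤ N) [DecidablePred fun q ↦ (approxSet γ q (ψ q) ∩ approxSet γ r (ψ r)).Nonempty] :
    ∑ q ∈ Finset.Ico Q r with (approxSet γ q (ψ q) ∩ approxSet γ r (ψ r)).Nonempty,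
      (q.gcd r : ℝ) / r ≤ 8 * C + (5 + 8 * C) * r.divisors.card / M := by
  have hC := h.pos
  have hr₀ := h.pos_of_le hQ
  set s := {q ∈ Finset.Ico Q r | (approxSet γ q (ψ q) ∩ approxSet γ r (ψ r)).Nonempty} with hs
  have hmaps : ∀ q ∈ s, q.gcd r ∈ r.divisors := fun q _ ↦
    Nat.mem_divisors.mpr ⟨Nat.gcd_dvd_right q r, hr₀.ne'⟩
  have hfiber (d) (hd : d ∈ r.divisors) : ∑ q ∈ s with q.gcd r = d, (q.gcd r : ℝ) / r ≤
      5 / M + 8 * C / (1 + log M) * (1 / d) := by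
    have hd₀ := Nat.pos_of_mem_divisors hd
    obtain ⟨r', rfl⟩ := Nat.dvd_of_mem_divisors hd
    have hr' : 0 < r' := pos_of_mul_pos_right hr₀ hd₀.le
    have hcard := h.card_filter_gcd_eq_nonempty_le hd₀ hQ hN
    rw [Finset.sum_congr rfl fun q hq ↦ by rw [(Finset.mem_filter.mp hq).2], Finset.sum_const,
      nsmul_eq_mul, hs, Finset.filter_filter]
    simp only [and_comm] at hcard ⊢
    push_cast
    rw [div_mul_cancel_left₀ (by positivity), ← div_eq_mul_inv, div_le_iff₀' (by positivity)]
    exact hcard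
  calc ∑ q ∈ s, (q.gcd r : ℝ) / r
      = ∑ d ∈ r.divisors, ∑ q ∈ s with q.gcd r = d, (q.gcd r : ℝ) / r :=
        (Finset.sum_fiberwise_of_maps_to hmaps _).symm
    _ ≤ ∑ d ∈ r.divisors, (5 / M + 8 * C / (1 + log M) * (1 / d)) := Finset.sum_le_sum hfiber
    _ ≤ 8 * C + (5 + 8 * C) * r.divisors.card / M :=
        sum_divisors_div_add_mul_one_div_le r (by positivity) h.one_le

lemma overlap_le_ite (h : IsResonantWindow ψ γ ρ Q N C M) {q r : ℕ} (hq : Q ≤ q) (hr : Q ≤ r)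
    [Decidable (approxSet γ q (ψ q) ∩ approxSet γ r (ψ r)).Nonempty] :
    volume.real (approxSet γ q (ψ q) ∩ approxSet γ r (ψ r)) -
      volume.real (approxSet γ q (ψ q)) * volume.real (approxSet γ r (ψ r)) ≤
      if (approxSet γ q (ψ q) ∩ approxSet γ r (ψ r)).Nonempty
        then 2 * ψ r * ((q.gcd r : ℝ) / r) else 0 := by
  have hψq := h.nonneg q hq
  have hψr := h.nonneg r hr
  rw [h.volume_real_approxSet_eq hq, h.volume_real_approxSet_eq hr]
  split_ifs with hne
  · have hinter := volume_real_approxSet_inter_le (γ := γ) (δ := γ) (r := q)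
      (h.pos_of_le hr).ne' hψr hψq
    rw [Set.inter_comm, Nat.gcd_comm] at hinter
    linarith
  · rw [Set.not_nonempty_iff_eq_empty.mp hne, measureReal_empty, zero_sub, neg_nonpos]
    positivity

lemma sum_overlap_le (h : IsResonantWindow ψ γ ρ Q N C M) {r : ℕ} (hQ : Q ≤ r) (hN : r ≤ N) :
    ∑ q ∈ Finset.Ico Q r, (volume.real (approxSet γ q (ψ q) ∩ approxSet γ r (ψ r)) -
      volume.real (approxSet γ q (ψ q)) * volume.real (approxSet γ r (ψ r))) ≤
      16 * C * ψ r + 2 * C * (5 + 8 * C) / M * (r.divisors.card / r) := by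
  classical
  have hC := h.pos
  have hM := one_pos.trans_le h.one_le
  have hψr := h.nonneg r hQ
  calc _ ≤ ∑ q ∈ Finset.Ico Q r, if (approxSet γ q (ψ q) ∩ approxSet γ r (ψ r)).Nonempty
          then 2 * ψ r * ((q.gcd r : ℝ) / r) else 0 :=
        Finset.sum_le_sum fun q hq ↦ h.overlap_le_ite (Finset.mem_Ico.mp hq).1 hQ
    _ = 2 * ψ r * ∑ q ∈ Finset.Ico Q r with (approxSet γ q (ψ q) ∩ approxSet γ r (ψ r)).Nonempty,
          (q.gcd r : ℝ) / r := by rw [← Finset.sum_filter, Finset.mul_sum]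
    _ ≤ 2 * ψ r * (8 * C + (5 + 8 * C) * r.divisors.card / M) := by
        gcongr
        exact h.sum_gcd_div_filter_nonempty_le hQ hN
    _ = 16 * C * ψ r + 2 * (5 + 8 * C) / M * r.divisors.card * ψ r := by ring
    _ ≤ 16 * C * ψ r + 2 * (5 + 8 * C) / M * r.divisors.card * (C / r) := by
        gcongr
        exact h.le_div_self hQ
    _ = 16 * C * ψ r + 2 * C * (5 + 8 * C) / M * (r.divisors.card / r) := by ring

lemma sum_card_divisors_div_le (h : IsResonantWindow ψ γ ρ Q N C M) :
    ∑ r ∈ Finset.Icc Q N, (r.divisors.card : ℝ) / r ≤ M := by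
  refine le_trans ?_ ((sum_Ioc_card_divisors_div_le N).trans h.sq_one_add_log_le)
  refine Finset.sum_le_sum_of_subset_of_nonneg (fun r hr ↦ ?_) fun _ _ _ ↦ by positivity
  obtain ⟨hQ, hN⟩ := Finset.mem_Icc.mp hr
  exact Finset.mem_Ioc.mpr ⟨h.pos_of_le hQ, hN⟩

theorem volume_real_compl_biUnion_mul_sq_le (h : IsResonantWindow ψ γ ρ Q N C M) :
    volume.real (⋃ q ∈ Finset.Icc Q N, approxSet γ q (ψ q))ᶜ *
      (2 * ∑ q ∈ Finset.Icc Q N, ψ q) ^ 2 ≤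
      (2 + 32 * C) * ∑ q ∈ Finset.Icc Q N, ψ q + 4 * C * (5 + 8 * C) := by
  have hC := h.pos
  have hM := one_pos.trans_le h.one_le
  have hmeas : ∑ q ∈ Finset.Icc Q N, volume.real (approxSet γ q (ψ q)) =
      2 * ∑ q ∈ Finset.Icc Q N, ψ q := by
    rw [Finset.mul_sum]
    exact Finset.sum_congr rfl fun q hq ↦ h.volume_real_approxSet_eq (Finset.mem_Icc.mp hq).1
  have hoverlaps : ∑ r ∈ Finset.Icc Q N, ∑ q ∈ Finset.Icc Q N with q < r,
      (volume.real (approxSet γ q (ψ q) ∩ approxSet γ r (ψ r)) -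
        volume.real (approxSet γ q (ψ q)) * volume.real (approxSet γ r (ψ r))) ≤
      16 * C * ∑ q ∈ Finset.Icc Q N, ψ q + 2 * C * (5 + 8 * C) := by
    calc _ ≤ ∑ r ∈ Finset.Icc Q N,
          (16 * C * ψ r + 2 * C * (5 + 8 * C) / M * (r.divisors.card / r)) := by
          refine Finset.sum_le_sum fun r hr ↦ ?_
          obtain ⟨hQ, hN⟩ := Finset.mem_Icc.mp hr
          rw [show {q ∈ Finset.Icc Q N | q < r} = Finset.Ico Q r by ext; grind]
          exact h.sum_overlap_le hQ hN
      _ ≤ 16 * C * ∑ q ∈ Finset.Icc Q N, ψ q + 2 * C * (5 + 8 * C) / M * M := by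
          rw [Finset.sum_add_distrib, ← Finset.mul_sum, ← Finset.mul_sum]
          gcongr
          exact h.sum_card_divisors_div_le
      _ = 16 * C * ∑ q ∈ Finset.Icc Q N, ψ q + 2 * C * (5 + 8 * C) := by
          rw [div_mul_cancel₀ _ hM.ne']
  have : IsProbabilityMeasure (volume : Measure UnitAddCircle) := ⟨UnitAddCircle.measure_univ⟩
  have hmoment := measureReal_compl_biUnion_mul_sq_le_of_linearOrder (μ := volume)
    (Finset.Icc Q N) fun q ↦ measurableSet_approxSet (γ := γ) (q := q) (a := ψ q)
  rw [hmeas] at hmoment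
  linarith

end IsResonantWindow

end Window

section Scales

variable {α : ℝ}

lemma eventually_logb_pow_rpow_le (k : ℕ) (p : ℝ) {c : ℝ} (hc : 0 < c) :
    ∀ᶠ n : ℕ in atTop, logb 2 ((n ^ k : ℕ) : ℝ) ^ p ≤ c * n := by
  have hlog : (fun n : ℕ ↦ log n ^ p) =o[atTop] fun n : ℕ ↦ (n : ℝ) := by
    simpa [Function.comp_def] using
      (isLittleO_log_rpow_rpow_atTop p one_pos).comp_tendsto tendsto_natCast_atTop_atTop
  filter_upwards [(hlog.const_mul_left ((k / log 2) ^ p)).bound hc] with n hn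
  have hlogn : 0 ≤ log n := log_natCast_nonneg n
  rw [Nat.cast_pow, logb_pow, logb, ← mul_div_assoc, mul_div_right_comm,
    mul_rpow (by positivity) hlogn]
  simpa using (le_norm_self _).trans hn

lemma one_add_log_rpow_le {l p : ℝ} (hl : 2 ≤ l) (hp : 0 ≤ p) :
    1 + log (l ^ p) ≤ (1 + p) * logb 2 l := by
  have hone : 1 ≤ logb 2 l := one_le_logb_two hl
  have hlog : log l ≤ logb 2 l :=
    le_div_self (log_nonneg (by linarith)) (log_pos one_lt_two) (by linarith [log_two_lt_d9])
  rw [log_rpow (by linarith), add_mul, one_mul]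
  gcongr

lemma sq_one_add_log_floor_rpow_le (hα : 0 ≤ α) {Q : ℕ} (hQ : 4 ≤ logb 2 Q) :
    (1 + log ⌊(Q : ℝ) ^ (logb 2 Q ^ α)⌋₊) ^ 2 ≤ logb 2 Q ^ (2 * (1 + α)) := by
  have hQ₀ : (1 : ℝ) ≤ Q := by
    by_contra! hlt
    linarith [logb_nonpos one_lt_two Q.cast_nonneg hlt.le]
  have hl : 0 < logb 2 Q := by linarith
  have hQ₁ : 1 ≤ (Q : ℝ) ^ (logb 2 Q ^ α) := one_le_rpow hQ₀ (by positivity)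
  have hfloor : log ⌊(Q : ℝ) ^ (logb 2 Q ^ α)⌋₊ ≤ logb 2 Q ^ (1 + α) * log 2 := by
    calc log ⌊(Q : ℝ) ^ (logb 2 Q ^ α)⌋₊ ≤ log ((Q : ℝ) ^ (logb 2 Q ^ α)) :=
          log_le_log (mod_cast Nat.floor_pos.mpr hQ₁) (Nat.floor_le (by positivity))
      _ = logb 2 Q ^ (1 + α) * log 2 := by
          rw [log_rpow (by positivity), rpow_add hl, rpow_one, logb]
          field
  have hfour : 4 ≤ logb 2 Q ^ (1 + α) :=
    hQ.trans (self_le_rpow_of_one_le (by linarith) (by linarith))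
  rw [mul_comm, rpow_mul hl.le, rpow_two]
  gcongr
  nlinarith [log_two_lt_d9]

lemma floor_rpow_mul_le_one_div {n k : ℕ} {δ : ℝ} (hn : 0 < n) (hδ₀ : 0 ≤ δ)
    (hδ : n * δ ≤ (n : ℝ) ^ (-(k * k ^ α * logb 2 n ^ α))) :
    ⌊((n ^ k : ℕ) : ℝ) ^ (logb 2 (n ^ k : ℕ) ^ α)⌋₊ * δ ≤ 1 / n := by
  have hlog : 0 ≤ logb 2 n := logb_nonneg one_lt_two (mod_cast hn)
  have hpow : ((n ^ k : ℕ) : ℝ) ^ (logb 2 (n ^ k : ℕ) ^ α) =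
      (n : ℝ) ^ (k * k ^ α * logb 2 n ^ α) := by
    rw [Nat.cast_pow, logb_pow, mul_rpow k.cast_nonneg hlog, ← rpow_natCast, ← rpow_mul
      n.cast_nonneg, mul_assoc]
  have hn₀ : (0 : ℝ) < n := mod_cast hn
  rw [le_div_iff₀ hn₀]
  calc ⌊((n ^ k : ℕ) : ℝ) ^ (logb 2 (n ^ k : ℕ) ^ α)⌋₊ * δ * n
      ≤ (n : ℝ) ^ (k * k ^ α * logb 2 n ^ α) * (n * δ) := by
        rw [mul_assoc, mul_comm δ, ← hpow]
        gcongr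
        exact Nat.floor_le (by positivity)
    _ ≤ (n : ℝ) ^ (k * k ^ α * logb 2 n ^ α) * (n : ℝ) ^ (-(k * k ^ α * logb 2 n ^ α)) := by
        gcongr
    _ = 1 := by rw [← rpow_add hn₀, add_neg_cancel, rpow_zero]

lemma tendsto_logb_two_natCast : Tendsto (fun n : ℕ ↦ logb 2 n) atTop atTop :=
  (tendsto_logb_atTop one_lt_two).comp tendsto_natCast_atTop_atTop

lemma exists_eventually_le_div_sq_one_add_log {p : ℝ} (hp : 0 ≤ p) {ψ : ℕ → ℝ}
    (hψ : ψ =O[atTop] fun q : ℕ ↦ ((q : ℝ) * logb 2 (logb 2 q) ^ 2)⁻¹) :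
    ∃ C > 0, ∀ᶠ Q : ℕ in atTop, ∀ q : ℕ, Q ≤ q →
      ψ q ≤ C / (q * (1 + log (logb 2 Q ^ p)) ^ 2) := by
  obtain ⟨C, hC, hbound⟩ := hψ.exists_pos
  refine ⟨C * (1 + p) ^ 2, by positivity, ?_⟩
  filter_upwards [eventually_forall_ge_atTop.mpr hbound.bound, eventually_gt_atTop 0,
    tendsto_logb_two_natCast.eventually_ge_atTop 2] with Q hψQ hQ hlogQ q hq
  have hqpos : 0 < q := hQ.trans_le hq
  have hlogM : 1 + log (logb 2 Q ^ p) ≤ (1 + p) * logb 2 (logb 2 q) := by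
    refine (one_add_log_rpow_le hlogQ hp).trans ?_
    gcongr <;> norm_num
  have hlogM₀ : 0 < 1 + log (logb 2 Q ^ p) := by
    linarith [log_nonneg (one_le_rpow (by linarith : 1 ≤ logb 2 Q) hp)]
  have hloglog : 0 < logb 2 (logb 2 q) := pos_of_mul_pos_right (hlogM₀.trans_le hlogM) (by linarith)
  calc ψ q ≤ C * ‖((q : ℝ) * logb 2 (logb 2 q) ^ 2)⁻¹‖ := (le_norm_self _).trans (hψQ q hq)
    _ = C * (1 + p) ^ 2 / (q * ((1 + p) * logb 2 (logb 2 q)) ^ 2) := by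
        rw [norm_of_nonneg (by positivity)]
        field
    _ ≤ C * (1 + p) ^ 2 / (q * (1 + log (logb 2 Q ^ p)) ^ 2) := by gcongr

lemma exists_eventually_isResonantWindow (hα : 0 ≤ α) {ψ : ℕ → ℝ} (hψ₀ : ∀ q, 0 ≤ ψ q)
    (hψ : ψ =O[atTop] fun q : ℕ ↦ ((q : ℝ) * logb 2 (logb 2 q) ^ 2)⁻¹) (γ : ℝ) :
    ∃ C > 0, ∀ᶠ n : ℕ in atTop, ∀ ρ : ℚ, ρ.den = n →
      n * |γ - ρ| ≤ (n : ℝ) ^ (-((6 : ℕ) * (6 : ℕ) ^ α * logb 2 n ^ α)) →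
      IsResonantWindow ψ γ ρ (n ^ 6) ⌊((n ^ 6 : ℕ) : ℝ) ^ (logb 2 (n ^ 6 : ℕ) ^ α)⌋₊ C
        (logb 2 (n ^ 6 : ℕ) ^ (2 * (1 + α))) := by
  obtain ⟨C, hC, hψC⟩ := exists_eventually_le_div_sq_one_add_log
    (by positivity : 0 ≤ 2 * (1 + α)) hψ
  refine ⟨C, hC, ?_⟩
  have hpow : Tendsto (fun n : ℕ ↦ n ^ 6) atTop atTop := tendsto_pow_atTop (by norm_num)
  filter_upwards [hpow.eventually hψC, eventually_gt_atTop 0,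
    tendsto_natCast_atTop_atTop.eventually_ge_atTop (4 * C),
    (tendsto_logb_two_natCast.comp hpow).eventually_ge_atTop 4,
    eventually_logb_pow_rpow_le 6 (2 * (1 + α)) one_pos,
    eventually_logb_pow_rpow_le 6 (2 * (1 + α) * 2) (by positivity : 0 < 2 * C)]
    with n hψn hn hCn hfour hMn hMsq ρ hρ hδ
  replace hfour : 4 ≤ logb 2 (n ^ 6 : ℕ) := hfour
  rw [rpow_mul (by linarith), rpow_two] at hMsq
  set M := logb 2 (n ^ 6 : ℕ) ^ (2 * (1 + α))
  have hM : 1 ≤ M := one_le_rpow (by linarith) (by positivity)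
  have hlogM : 1 + log M ≤ M := by linarith [log_le_sub_one_of_pos (one_pos.trans_le hM)]
  have hlogM₀ : 0 < 1 + log M := by linarith [log_nonneg hM]
  exact
    { pos := hC
      one_le := hM
      le_den := by simpa [hρ] using hMn
      nonneg := fun q _ ↦ hψ₀ q
      le_div := hψn
      le_left := by
        rw [hρ, Nat.cast_pow, pow_succ' (n : ℝ) 5]
        gcongr
      mul_abs_sub_le := by
        refine (floor_rpow_mul_le_one_div hn (abs_nonneg _) hδ).trans ?_
        rw [div_le_div_iff₀ (by positivity) (by positivity), one_mul]
        exact (by gcongr : (1 + log M) ^ 2 ≤ M ^ 2).trans hMsq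
      sq_one_add_log_le := sq_one_add_log_floor_rpow_le hα hfour }

end Scales

section FullMeasure

lemma eq_zero_of_mul_sq_le_of_unbounded {v a b : ℝ} (hv : 0 ≤ v)
    (h : ∀ B : ℝ, ∃ S, B ≤ S ∧ v * (2 * S) ^ 2 ≤ a * S + b) : v = 0 := by
  by_contra hne
  have hvpos : 0 < v := hv.lt_of_ne' hne
  obtain ⟨S, hS, hle⟩ := h (max 1 ((|a| + |b|) / v))
  obtain ⟨hone, hlarge⟩ := max_le_iff.mp hS
  have hvS : |a| + |b| ≤ v * S := (div_le_iff₀' hvpos).mp hlarge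
  have hub : a * S + b ≤ (|a| + |b|) * S := by
    rw [add_mul]
    exact add_le_add (by gcongr; exact le_abs_self a)
      ((le_abs_self b).trans (le_mul_of_one_le_right (abs_nonneg b) hone))
  nlinarith [mul_pos hvpos (one_pos.trans_le hone)]

lemma ae_exists_lt_mem_approxSet {α : ℝ} (hα : 0 ≤ α) {ψ : ℕ → ℝ} (hψ₀ : ∀ q, 0 ≤ ψ q)
    (hψ : ψ =O[atTop] fun q : ℕ ↦ ((q : ℝ) * logb 2 (logb 2 q) ^ 2)⁻¹)
    (hdiv : Tendsto (fun Q : ℕ ↦ ∑ q ∈ Finset.Icc Q ⌊(Q : ℝ) ^ (logb 2 Q ^ α)⌋₊, ψ q) atTop atTop)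
    {γ : ℝ} (hγ : Irrational γ) (hwild : ¬sigmaExp γ =O[atTop] fun Q : ℕ ↦ logb 2 Q ^ α) (k : ℕ) :
    ∀ᵐ x : UnitAddCircle, ∃ q, k < q ∧ x ∈ approxSet γ q (ψ q) := by
  have : IsProbabilityMeasure (volume : Measure UnitAddCircle) := ⟨UnitAddCircle.measure_univ⟩
  obtain ⟨C, -, hwindow⟩ := exists_eventually_isResonantWindow hα hψ₀ hψ γ
  rw [ae_iff, ← measureReal_eq_zero_iff]
  refine eq_zero_of_mul_sq_le_of_unbounded (a := 2 + 32 * C) (b := 4 * C * (5 + 8 * C))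
    measureReal_nonneg fun B ↦ ?_
  have hpow : Tendsto (fun n : ℕ ↦ n ^ 6) atTop atTop := tendsto_pow_atTop (by norm_num)
  obtain ⟨n₀, hn₀⟩ := eventually_atTop.mp
    (hwindow.and ((hpow.eventually (hdiv.eventually_ge_atTop B)).and (hpow.eventually_gt_atTop k)))
  obtain ⟨ρ, hden, hρ⟩ := exists_rat_den_mul_abs_sub_le_rpow hα hγ hwild ((6 : ℕ) * (6 : ℕ) ^ α) n₀
  obtain ⟨hres, hB, hk⟩ := hn₀ ρ.den hden.le
  refine ⟨_, hB, le_trans ?_ (hres ρ rfl hρ).volume_real_compl_biUnion_mul_sq_le⟩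
  refine mul_le_mul_of_nonneg_right (measureReal_mono fun x hx hmem ↦ ?_) (sq_nonneg _)
  obtain ⟨q, hq, hxq⟩ := Set.mem_iUnion₂.mp hmem
  exact hx ⟨q, hk.trans_le (Finset.mem_Icc.mp hq).1, hxq⟩

lemma coe_mem_approxSet_iff {γ x r : ℝ} {q : ℕ} :
    (x : UnitAddCircle) ∈ approxSet γ q r ↔ dnint (q * x - γ) < r := by
  rw [mem_approxSet, ← AddCircle.coe_nsmul, ← AddCircle.coe_sub, nsmul_eq_mul,
    UnitAddCircle.norm_eq, dnint]

lemma volume_W_eq_one {ψ : ℕ → ℝ} {γ : ℝ}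
    (h : ∀ k, ∀ᵐ x : UnitAddCircle, ∃ q, k < q ∧ x ∈ approxSet γ q (ψ q)) :
    volume (W ψ γ) = 1 := by
  have hIoc := (UnitAddCircle.measurePreserving_mk 0).quasiMeasurePreserving.ae (ae_all_iff.mpr h)
  rw [ae_restrict_iff' measurableSet_Ioc, zero_add] at hIoc
  apply le_antisymm
  · calc volume (W ψ γ) ≤ volume (Set.Icc (0 : ℝ) 1) := measure_mono fun _ hx ↦ hx.1
      _ = 1 := by simp
  · calc (1 : ENNReal) = volume (Set.Ioc (0 : ℝ) 1) := by simp
      _ ≤ volume (W ψ γ) := measure_mono_ae <| hIoc.mono fun x hx hxI ↦ by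
        refine ⟨Set.Ioc_subset_Icc_self hxI, Set.infinite_of_forall_exists_gt fun k ↦ ?_⟩
        obtain ⟨q, hkq, hq⟩ := hx hxI k
        exact ⟨q, ⟨k.zero_le.trans_lt hkq, coe_mem_approxSet_iff.mp hq⟩, hkq⟩

lemma isBigO_inv_of_le_div {ψ f : ℕ → ℝ} {C : ℝ} {q₀ : ℕ} (hψ₀ : ∀ q, 0 ≤ ψ q)
    (h : ∀ q, q₀ ≤ q → ψ q ≤ C / f q) : ψ =O[atTop] fun q ↦ (f q)⁻¹ := by
  refine .of_bound |C| ((eventually_ge_atTop q₀).mono fun q hq ↦ ?_)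
  rw [norm_of_nonneg (hψ₀ q), ← norm_eq_abs, ← norm_mul, ← div_eq_mul_inv]
  exact (h q hq).trans (le_norm_self _)

end FullMeasure

theorem stmt1_general {α : ℝ} (hα : 0 ≤ α) (ψ : ℕ → ℝ) (hψ₀ : ∀ q, 0 ≤ ψ q)
    (hψ : ψ =O[atTop] fun q : ℕ ↦ ((q : ℝ) * logb 2 (logb 2 q) ^ 2)⁻¹)
    (hdiv : Tendsto (fun Q : ℕ ↦ ∑ q ∈ Finset.Icc Q ⌊(Q : ℝ) ^ (logb 2 Q ^ α)⌋₊, ψ q) atTop atTop)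
    (γ : ℝ) (hγ : Irrational γ) (hwild : ¬sigmaExp γ =O[atTop] fun Q : ℕ ↦ logb 2 Q ^ α) :
    volume (W ψ γ) = 1 :=
  volume_W_eq_one (ae_exists_lt_mem_approxSet hα hψ₀ hψ hdiv hγ hwild)

theorem stmt1 (ψ : ℕ → ℝ) (hψ0 : ∀ q, 0 ≤ ψ q)
    (hψhalf : ∀ q, 1 ≤ q → ψ q < 1/2)
    (hO : ∃ C > (0:ℝ), ∀ q : ℕ, 3 ≤ q →
      ψ q ≤ C / ((q : ℝ) * (Real.logb 2 (Real.logb 2 q)) ^ 2))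
    (hdiv : WeaklyExtraDivergent ψ)
    (γ : ℝ) (hγ : Irrational γ) (hwild : ¬ TamelyLiouville γ) :
    volume (W ψ γ) = 1 := by
  obtain ⟨C, -, hO⟩ := hO
  exact stmt1_general (by norm_num) ψ hψ0 (isBigO_inv_of_le_div hψ0 hO) hdiv γ hγ
    fun h ↦ hwild (tamelyLiouville_of_isBigO (by norm_num) h)
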